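/- Let E = E(2,M,p) be a planar fractal percolation with p > M^{-2}. There exists a constant λ ∈ (0,1) (depending only on M and p) such that, conditioned on E ≠ ∅, almost surely there exists N₆ (depending on the realization) such that for every n > N₆ there exists a segment ℓ ∈ 𝔏 with #ℰ_n(ℓ) > λ·n. -/

import Mathlib

open MeasureTheory Set ENNReal ProbabilityTheory Real

noncomputable section

/-- The alphabet indexing the `M^d` subcubes of a cube in `[0,1]^d`. -/
abbrev Alpha (d M : ℕ) : Type := Fin d → Fin M

/-- Finite nonempty words over the alphabet; they index `M`-adic cubes. -/
abbrev Word (d M : ℕ) : Type := {w : List (Alpha d M) // w ≠ []}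

/-- The sample space: `{0,1}`-labelings of all finite nonempty words. -/
abbrev PercSpace (d M : ℕ) : Type := Word d M → Bool

/-- `P` is the product measure making the labels i.i.d. Bernoulli(`p`). -/
def IsBernoulliPerc (d M : ℕ) (p : ℝ) (P : Measure (PercSpace d M)) : Prop :=
  IsProbabilityMeasure P ∧
    ∀ (S : Finset (Word d M)) (b : Word d M → Bool),
      P {ω | ∀ w ∈ S, ω w = b w} =
        ∏ w ∈ S, if b w then ENNReal.ofReal p else ENNReal.ofReal (1 - p)

/-- A level-`w.length` cube is retained iff its word and every nonempty prefix
of its word carry label 1. -/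
def Retained (d M : ℕ) (ω : PercSpace d M) (w : List (Alpha d M)) : Prop :=
  ∀ (u : List (Alpha d M)) (hu : u ≠ []), u <+: w → ω ⟨u, hu⟩ = true

/-- The `i`-th coordinate of the lower-left corner of the cube indexed by `w`. -/
def wordBase (d M : ℕ) (w : List (Alpha d M)) (i : Fin d) : ℝ :=
  ∑ j : Fin w.length, ((w.get j) i : ℝ) * (M : ℝ) ^ (-(j : ℤ) - 1)

/-- The closed `M`-adic cube of level `w.length` indexed by the word `w`. -/
def wordCube (d M : ℕ) (w : List (Alpha d M)) : Set (EuclideanSpace ℝ (Fin d)) :=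
  {x | ∀ i, wordBase d M w i ≤ x i ∧ x i ≤ wordBase d M w i + (M : ℝ) ^ (-(w.length : ℤ))}

/-- `E_n`, the union of the retained level-`n` cubes. -/
def approx (d M : ℕ) (ω : PercSpace d M) (n : ℕ) : Set (EuclideanSpace ℝ (Fin d)) :=
  ⋃ w ∈ {w : List (Alpha d M) | w.length = n ∧ Retained d M ω w}, wordCube d M w

/-- The fractal percolation set `E = ⋂_{n ≥ 1} E_n`. -/
def percLimit (d M : ℕ) (ω : PercSpace d M) : Set (EuclideanSpace ℝ (Fin d)) :=
  ⋂ n ∈ {n : ℕ | 1 ≤ n}, approx d M ω n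

/-- The segment cut out of `[0,1]²` by the line through `z` with direction `v`. -/
def lineSeg (z v : EuclideanSpace ℝ (Fin 2)) : Set (EuclideanSpace ℝ (Fin 2)) :=
  {x | (∃ t : ℝ, x = z + t • v) ∧ ∀ i, 0 ≤ x i ∧ x i ≤ 1}

/-- The line through `z` with direction `v` meets the open unit square. -/
def MeetsOpenSquare (z v : EuclideanSpace ℝ (Fin 2)) : Prop :=
  ∃ t : ℝ, ∀ i, 0 < (z + t • v) i ∧ (z + t • v) i < 1

/-- The line with direction `v` makes an acute angle `> θ` with both coordinate
axes (the angle with the `x`-axis has sine `|v 1|/‖v‖`, the one with the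
`y`-axis has sine `|v 0|/‖v‖`). -/
def AngleSep (θ : ℝ) (v : EuclideanSpace ℝ (Fin 2)) : Prop :=
  Real.sin θ * ‖v‖ < |v 1| ∧ Real.sin θ * ‖v‖ < |v 0|

/-! ### Measure theory -/

/-- Bernoulli measure on `Bool`. -/
def berB (p : ℝ) : Measure Bool :=
  ENNReal.ofReal p • Measure.dirac true + ENNReal.ofReal (1 - p) • Measure.dirac false

lemma berB_prob {p : ℝ} (h0 : 0 ≤ p) (h1 : p ≤ 1) : IsProbabilityMeasure (berB p) := by
  constructor
  simp only [berB, Measure.coe_add, Measure.coe_smul, Pi.add_apply, Pi.smul_apply,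
    measure_univ, smul_eq_mul, mul_one]
  rw [← ENNReal.ofReal_add h0 (by linarith)]
  simp

lemma berB_singleton (p : ℝ) (b : Bool) :
    berB p {b} = if b then ENNReal.ofReal p else ENNReal.ofReal (1 - p) := by
  cases b <;> simp [berB]

/-- Labelings of all words, including the empty one. -/
abbrev TreeSpace (A : Type) : Type := List A → Bool

/-- The product measure on `TreeSpace`. -/
def treeMeasure (A : Type) (p : ℝ) [IsProbabilityMeasure (berB p)] : Measure (TreeSpace A) :=
  Measure.infinitePi fun _ : List A => berB p

instance (A : Type) (p : ℝ) [IsProbabilityMeasure (berB p)] :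
    IsProbabilityMeasure (treeMeasure A p) := by
  unfold treeMeasure; infer_instance

/-- The labeling of the subtree at a child. -/
def shiftT {A : Type} (a : A) (ω : TreeSpace A) : TreeSpace A := fun t => ω (a :: t)

lemma measurable_shiftT {A : Type} (a : A) : Measurable (shiftT a) := by
  unfold shiftT; fun_prop

/-- Index types of the blocks. -/
def blockIdx (A : Type) : Option A → Type
  | none => Unit
  | some _ => List A

/-- The word of an index. -/
def blockWord (A : Type) : (Σ o : Option A, blockIdx A o) → List A
  | ⟨none, _⟩ => []
  | ⟨some a, t⟩ => a :: t

lemma blockWord_inj (A : Type) : Function.Injective (blockWord A) := by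
  rintro ⟨_ | a, s⟩ ⟨_ | b, t⟩ h
  · rfl
  · simp [blockWord] at h
  · simp [blockWord] at h
  · simp only [blockWord] at h
    injection h with h1 h2
    subst h1
    congr

lemma tree_branch {A : Type} [Fintype A] (p : ℝ) [IsProbabilityMeasure (berB p)] (B : Set Bool)
    (S : A → Set (TreeSpace A)) (hS : ∀ a, MeasurableSet (S a)) :
    treeMeasure A p {ω | ω [] ∈ B ∧ ∀ a, shiftT a ω ∈ S a} =
      berB p B * ∏ a, treeMeasure A p (S a) := by
  classical
  have h1 := Measure.map_infinitePi_infinitePi_of_inj (P := fun _ : List A => berB p)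
    (blockWord_inj A)
  have h2 := Measure.infinitePi_map_piCurry (X := fun (o : Option A) (_ : blockIdx A o) => Bool)
    (fun _ _ => berB p)
  rw [← h1, Measure.map_map (by fun_prop) (by fun_prop)] at h2
  let T : (o : Option A) → Set (blockIdx A o → Bool) := fun o =>
    match o with
    | none => {x | x () ∈ B}
    | some a => S a
  have hT : ∀ o, MeasurableSet (T o) := by
    rintro (_ | a)
    · exact measurableSet_preimage (measurable_pi_apply (X := fun _ : blockIdx A none => Bool) ()) (MeasurableSet.of_discrete (s := B))
    · exact hS a
  have h3 := congrArg (fun m => m (Set.pi univ T)) h2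
  rw [Measure.map_apply (by fun_prop) (MeasurableSet.univ_pi hT),
    Measure.infinitePi_eq_pi (ι := Option A),
    Measure.pi_pi, Fintype.prod_option] at h3
  have e1 : (⇑(MeasurableEquiv.piCurry fun (o : Option A) (_ : blockIdx A o) => Bool) ∘
      fun (ω : List A → Bool) i => ω (blockWord A i)) ⁻¹' Set.pi univ T
      = {ω | ω [] ∈ B ∧ ∀ a, shiftT a ω ∈ S a} := by
    ext ω
    simp only [mem_preimage, mem_pi, mem_univ, true_imp_iff, mem_ofPred_eq]
    constructor
    · intro h
      exact ⟨h none, fun a => h (some a)⟩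
    · rintro ⟨h, h'⟩ (_ | a)
      · exact h
      · exact h' a
  rw [e1] at h3
  unfold treeMeasure
  rw [h3]
  congr 1
  have h4 := Measure.infinitePi_map_eval (fun _ : blockIdx A none => berB p) ()
  have h5 := congrArg (fun m => m B) h4
  rw [Measure.map_apply (by fun_prop) (MeasurableSet.of_discrete (s := B))] at h5
  exact h5

/-- Restriction of a labelling to nonempty words. -/
def dropRoot {d M : ℕ} (ω : TreeSpace (Alpha d M)) : PercSpace d M := fun w => ω w.1

lemma perc_eq {d M : ℕ} {p : ℝ} [IsProbabilityMeasure (berB p)] {P : Measure (PercSpace d M)}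
    (hP : IsBernoulliPerc d M p P) :
    P = (treeMeasure (Alpha d M) p).map dropRoot := by
  have h1 := Measure.map_infinitePi_infinitePi_of_inj (P := fun _ : List (Alpha d M) => berB p)
    (f := fun w : Word d M => w.1) Subtype.val_injective
  have h2 : (treeMeasure (Alpha d M) p).map dropRoot
    = Measure.infinitePi fun _ : Word d M => berB p := h1
  rw [h2]
  have := hP.1
  refine (Measure.isProjectiveLimit_infinitePi (fun _ : Word d M => berB p)).unique ?_ |>.symm
  intro I
  classical
  apply Measure.ext_of_singleton
  intro x
  rw [Measure.map_apply (by fun_prop) (measurableSet_singleton x), Measure.pi_singleton]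
  have := hP.2 I (fun w => if h : w ∈ I then x ⟨w, h⟩ else true)
  have hset : I.restrict ⁻¹' ({x} : Set (I → Bool)) = {ω : PercSpace d M | ∀ w ∈ I, ω w =
      (fun w => if h : w ∈ I then x ⟨w, h⟩ else true) w} := by
    ext ω
    simp only [mem_preimage, mem_singleton_iff, mem_ofPred_eq, funext_iff, Finset.restrict]
    constructor
    · intro h w hw; simp [hw, ← h ⟨w, hw⟩]
    · intro h w; simpa using h w.1 w.2
  rw [hset, this, ← Finset.prod_attach]
  rw [Finset.univ_eq_attach]
  refine Finset.prod_congr rfl ?_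
  intro i _
  rw [berB_singleton]
  simp

/-! ### Analysis of the generating function -/

/-- The generating function `s ↦ 1 - p + p s^N`. -/
def genF (p : ℝ) (N : ℕ) (s : ℝ) : ℝ := 1 - p + p * s ^ N

lemma genF_mono {p : ℝ} {N : ℕ} (hp : 0 ≤ p) {s t : ℝ} (hs : 0 ≤ s) (hst : s ≤ t) :
    genF p N s ≤ genF p N t := by
  unfold genF
  have := pow_le_pow_left₀ hs hst N
  nlinarith

lemma genF_one (p : ℝ) (N : ℕ) : genF p N 1 = 1 := by simp [genF]

lemma genF_nonneg {p : ℝ} {N : ℕ} (hp : 0 ≤ p) (hp1 : p ≤ 1) {s : ℝ} (hs : 0 ≤ s) :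
    0 ≤ genF p N s := by
  unfold genF
  have : 0 ≤ p * s ^ N := by positivity
  linarith

lemma genF_three {p : ℝ} {N : ℕ} (hp : 0 ≤ p) {x y z : ℝ} (hx : 0 ≤ x) (hxy : x ≤ y)
    (hyz : y ≤ z) :
    (z - x) * genF p N y ≤ (z - y) * genF p N x + (y - x) * genF p N z := by
  rcases eq_or_lt_of_le (hxy.trans hyz) with h | h
  · have h1 : y = x := by linarith
    subst h; subst h1; simp
  have hz : 0 ≤ z := hx.trans (hxy.trans hyz)
  have hc := (convexOn_pow (𝕜 := ℝ) N).2 (mem_Ici.2 hx) (mem_Ici.2 hz)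
    (show 0 ≤ (z - y) / (z - x) from div_nonneg (by linarith) (by linarith))
    (show 0 ≤ (y - x) / (z - x) from div_nonneg (by linarith) (by linarith))
    (by rw [← add_div]; rw [div_eq_one_iff_eq (by linarith)]; ring)
  have hy : (z - y) / (z - x) * x + (y - x) / (z - x) * z = y := by
    have : z - x ≠ 0 := by linarith
    field_simp; ring
  simp only [smul_eq_mul] at hc
  rw [hy] at hc
  have h2 : (z - x) * y ^ N ≤ (z - y) * x ^ N + (y - x) * z ^ N := by
    have h3 := mul_le_mul_of_nonneg_left hc (by linarith : 0 ≤ z - x)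
    have : z - x ≠ 0 := by linarith
    calc _ ≤ _ := h3
      _ = _ := by field_simp
  unfold genF
  nlinarith

lemma genF_iter_nonneg {p : ℝ} {N : ℕ} (hp : 0 ≤ p) (hp1 : p ≤ 1) {s : ℝ} (hs : 0 ≤ s) (j : ℕ) :
    0 ≤ (genF p N)^[j] s := by
  induction j with
  | zero => simpa
  | succ j ih => rw [Function.iterate_succ_apply']; exact genF_nonneg hp hp1 ih

lemma genF_iter_mono {p : ℝ} {N : ℕ} (hp : 0 ≤ p) (hp1 : p ≤ 1) {s t : ℝ} (hs : 0 ≤ s)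
    (hst : s ≤ t) (j : ℕ) : (genF p N)^[j] s ≤ (genF p N)^[j] t := by
  induction j with
  | zero => simpa
  | succ j ih =>
    rw [Function.iterate_succ_apply', Function.iterate_succ_apply']
    exact genF_mono hp (genF_iter_nonneg hp hp1 hs j) ih

/-- In the supercritical case the iterates started away from `1` contract geometrically. -/
lemma genF_contract {p : ℝ} {N : ℕ} (hp : 0 < p) (hp1 : p ≤ 1) (hN : 1 < p * N) :
    ∃ a r : ℝ, 1 < a ∧ 0 ≤ r ∧ r < 1 ∧ ∀ x ∈ Icc (0 : ℝ) 1, ∀ i j : ℕ, 1 ≤ a ^ j * (1 - x) →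
      (genF p N)^[i + j] x - (genF p N)^[i + j] 0 ≤ r ^ i := by
  have hN0 : (0 : ℝ) < N := by
    by_contra h
    have : (N : ℝ) ≤ 0 := by linarith
    nlinarith
  set f := genF p N with hf
  obtain ⟨y, hy0, hy1, hfy⟩ : ∃ y : ℝ, 0 < y ∧ y < 1 ∧ f y < y := by
    set t : ℝ := (p - 1 / N) / 2 with ht
    have h1 : 0 < (1 : ℝ) / N := by positivity
    have h2 : (1 : ℝ) / N < p := by rw [div_lt_iff₀ hN0]; exact hN
    have ht0 : 0 < t := by rw [ht]; linarith
    have ht1 : t < 1 := by rw [ht]; linarith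
    refine ⟨1 - t, by linarith, by linarith, ?_⟩
    have hb := one_add_mul_le_pow (a := t) (by linarith) N
    have hq : (1 - t) ^ N * (1 + N * t) ≤ 1 := by
      calc (1 - t) ^ N * (1 + N * t) ≤ (1 - t) ^ N * (1 + t) ^ N := by
            apply mul_le_mul_of_nonneg_left hb
            exact pow_nonneg (by linarith) _
        _ = ((1 - t) * (1 + t)) ^ N := (mul_pow _ _ _).symm
        _ ≤ 1 := pow_le_one₀ (by nlinarith) (by nlinarith)
    have hNt : N * t = (p * N - 1) / 2 := by rw [ht]; field_simp
    have hpos : 0 < 1 + N * t := by positivity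
    have hq' : (1 - t) ^ N ≤ 1 / (1 + N * t) := by rwa [le_div_iff₀ hpos]
    have hkey : p * (1 / (1 + N * t)) < p - t := by
      rw [mul_one_div, div_lt_iff₀ hpos]
      nlinarith [mul_pos ht0 (by linarith : (0:ℝ) < p * N - 1)]
    simp only [hf, genF]
    nlinarith
  have hcont : Continuous f := by
    have : f = fun s => 1 - p + p * s ^ N := rfl
    rw [this]; fun_prop
  obtain ⟨e, ⟨he0, hey⟩, hfe⟩ : ∃ e ∈ Icc (0:ℝ) y, f e - e = 0 := by
    have := intermediate_value_Icc' (f := fun s => f s - s) hy0.le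
      ((hcont.sub continuous_id).continuousOn)
    apply this
    constructor
    · simp; linarith
    · simpa using genF_nonneg hp.le hp1 le_rfl
  have hfe : f e = e := by linarith
  have hey : e < y := lt_of_le_of_ne hey (by rintro rfl; linarith)
  set a := (1 - f y) / (1 - y) with ha
  set r := (f y - e) / (y - e) with hr
  have hefy : e ≤ f y := by rw [← hfe]; exact genF_mono hp.le he0 hey.le
  have hr0 : 0 ≤ r := div_nonneg (by linarith) (by linarith)
  have hr1 : r < 1 := by rw [hr, div_lt_one (by linarith)]; linarith
  have ha1 : 1 < a := by rw [ha, one_lt_div (by linarith)]; linarith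
  have hra : r * (y - e) = f y - e := div_mul_cancel₀ _ (by linarith)
  have haa : a * (1 - y) = 1 - f y := div_mul_cancel₀ _ (by linarith)
  refine ⟨a, r, ha1, hr0, hr1, ?_⟩
  intro x hx i j hj
  -- phase one
  have ph1 : ∀ j, f^[j] x ≤ 1 ∧ (f^[j] x ≤ y ∨ a ^ j * (1 - x) ≤ 1 - f^[j] x) := by
    intro j
    induction j with
    | zero => simp [hx.2]
    | succ j ih =>
      obtain ⟨h1, h2⟩ := ih
      have h0 := genF_iter_nonneg (N := N) hp.le hp1 hx.1 j
      rw [← hf] at h0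
      rw [Function.iterate_succ_apply']
      have h1' : f (f^[j] x) ≤ 1 := by
        rw [← genF_one p N]; exact genF_mono hp.le h0 h1
      refine ⟨h1', ?_⟩
      by_cases hle : f^[j] x ≤ y
      · left
        exact (genF_mono hp.le h0 hle).trans hfy.le
      · right
        have h2 := h2.resolve_left hle
        push Not at hle
        have h3 := genF_three (N := N) hp.le hy0.le hle.le h1
        rw [genF_one, ← hf] at h3
        have h4 : a * (1 - f^[j] x) ≤ 1 - f (f^[j] x) := by
          have : (1 - y) * (a * (1 - f^[j] x)) ≤ (1 - y) * (1 - f (f^[j] x)) := by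
            have : (1 - y) * (a * (1 - f^[j] x)) = (1 - f y) * (1 - f^[j] x) := by
              rw [← haa]; ring
            rw [this]; nlinarith
          exact le_of_mul_le_mul_left this (by linarith)
        calc a ^ (j + 1) * (1 - x) = a * (a ^ j * (1 - x)) := by ring
          _ ≤ a * (1 - f^[j] x) := by gcongr
          _ ≤ _ := h4
  have hjy : f^[j] x ≤ y := by
    rcases (ph1 j).2 with h | h
    · exact h
    · linarith
  -- phase two
  have ph2 : ∀ i, 0 ≤ f^[i] 0 ∧ f^[i] 0 ≤ e ∧ e ≤ f^[i] y ∧ f^[i] y ≤ y ∧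
      f^[i] y - f^[i] 0 ≤ r ^ i := by
    intro i
    induction i with
    | zero => simp; exact ⟨he0, hey.le, hy1.le⟩
    | succ i ih =>
      obtain ⟨i0, i1, i2, i3, i4⟩ := ih
      rw [Function.iterate_succ_apply', Function.iterate_succ_apply']
      set u := f^[i] 0
      set v := f^[i] y
      refine ⟨genF_nonneg hp.le hp1 i0, ?_, ?_, ?_, ?_⟩
      · rw [← hfe]; exact genF_mono hp.le i0 i1
      · rw [← hfe]; exact genF_mono hp.le he0 i2
      · exact (genF_mono hp.le (he0.trans i2) i3).trans hfy.le
      · have t1 := genF_three (N := N) hp.le he0 i2 i3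
        have t2 := genF_three (N := N) hp.le i0 i1 hey.le
        rw [← hf, hfe] at t1 t2
        have v1 : f v ≤ e + r * (v - e) := by
          have : (y - e) * f v ≤ (y - e) * (e + r * (v - e)) := by
            have : (y - e) * (e + r * (v - e)) = (y - e) * e + (f y - e) * (v - e) := by
              rw [← hra]; ring
            rw [this]; nlinarith
          exact le_of_mul_le_mul_left this (by linarith)
        have u1 : e - r * (e - u) ≤ f u := by
          have : (y - e) * (e - r * (e - u)) ≤ (y - e) * f u := by
            have : (y - e) * (e - r * (e - u)) = (y - e) * e - (f y - e) * (e - u) := by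
              rw [← hra]; ring
            rw [this]; nlinarith
          exact le_of_mul_le_mul_left this (by linarith)
        calc f v - f u ≤ r * (v - u) := by linarith
          _ ≤ r * r ^ i := by gcongr
          _ = _ := by ring
  have hA : f^[i + j] x ≤ f^[i] y := by
    rw [Function.iterate_add_apply]
    exact genF_iter_mono hp.le hp1 (genF_iter_nonneg hp.le hp1 hx.1 j) hjy i
  have hB : f^[i] 0 ≤ f^[i + j] 0 := by
    rw [Function.iterate_add_apply]
    exact genF_iter_mono hp.le hp1 le_rfl (genF_iter_nonneg hp.le hp1 le_rfl j) i
  have := (ph2 i).2.2.2.2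
  linarith

/-! ### Events -/

/-- A full row of depth `k` below the root is labelled 1. -/
def rowEvent (M : ℕ) : ℕ → Set (TreeSpace (Alpha 2 M))
  | 0 => {ω | ω [] = true}
  | k + 1 => {ω | ω [] ∈ ({true} : Set Bool) ∧
      ∀ a : Alpha 2 M, shiftT a ω ∈ (if (a 1).val = 0 then rowEvent M k else univ)}

/-- Every retained vertex at depth `m` has its subtree in `S`. -/
def iterE {A : Type} (S : Set (TreeSpace A)) : ℕ → Set (TreeSpace A)
  | 0 => S
  | m + 1 => {ω | ω [] ∈ ({true} : Set Bool) ∧ ∀ a : A, shiftT a ω ∈ iterE S m} ∪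
      {ω | ω [] ∈ ({false} : Set Bool) ∧ ∀ a : A, shiftT a ω ∈ (univ : Set (TreeSpace A))}

/-- The root is not retained. -/
def deadRoot (A : Type) : Set (TreeSpace A) :=
  {ω | ω [] ∈ ({false} : Set Bool) ∧ ∀ a : A, shiftT a ω ∈ (univ : Set (TreeSpace A))}

lemma measurableSet_branch {A : Type} [Countable A] (B : Set Bool) (S : A → Set (TreeSpace A))
    (hS : ∀ a, MeasurableSet (S a)) :
    MeasurableSet {ω : TreeSpace A | ω [] ∈ B ∧ ∀ a, shiftT a ω ∈ S a} := by
  have h1 : MeasurableSet {ω : TreeSpace A | ω [] ∈ B} :=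
    measurableSet_preimage (measurable_pi_apply (X := fun _ : List A => Bool) [])
      (MeasurableSet.of_discrete (s := B))
  have h2 : MeasurableSet {ω : TreeSpace A | ∀ a, shiftT a ω ∈ S a} := by
    rw [show {ω : TreeSpace A | ∀ a, shiftT a ω ∈ S a} = ⋂ a, shiftT a ⁻¹' (S a) by
      ext; simp]
    exact MeasurableSet.iInter fun a => measurable_shiftT a (hS a)
  exact h1.inter h2

lemma measurableSet_deadRoot (A : Type) [Countable A] : MeasurableSet (deadRoot A) :=
  measurableSet_branch _ _ fun _ => MeasurableSet.univ

lemma measurableSet_iterE {A : Type} [Countable A] {S : Set (TreeSpace A)} (hS : MeasurableSet S)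
    (m : ℕ) : MeasurableSet (iterE S m) := by
  induction m with
  | zero => exact hS
  | succ m ih =>
    exact (measurableSet_branch _ _ fun _ => ih).union
      (measurableSet_branch _ _ fun _ => MeasurableSet.univ)

lemma measurableSet_rowEvent (M k : ℕ) : MeasurableSet (rowEvent M k) := by
  induction k with
  | zero =>
    exact measurableSet_preimage (measurable_pi_apply (X := fun _ : List (Alpha 2 M) => Bool) [])
      (MeasurableSet.of_discrete (s := {true}))
  | succ k ih =>
    refine measurableSet_branch _ _ fun a => ?_
    split_ifs
    · exact ih
    · exact MeasurableSet.univ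

lemma berB_real_true {p : ℝ} (h0 : 0 ≤ p) : (berB p).real {true} = p := by
  rw [measureReal_def, berB_singleton]; simp [h0]

lemma berB_real_false {p : ℝ} (h1 : p ≤ 1) : (berB p).real {false} = 1 - p := by
  rw [measureReal_def, berB_singleton]; simp [h1]

lemma tree_branch_real {A : Type} [Fintype A] (p : ℝ) [IsProbabilityMeasure (berB p)]
    (B : Set Bool) (S : A → Set (TreeSpace A)) (hS : ∀ a, MeasurableSet (S a)) :
    (treeMeasure A p).real {ω | ω [] ∈ B ∧ ∀ a, shiftT a ω ∈ S a} =
      (berB p).real B * ∏ a, (treeMeasure A p).real (S a) := by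
  simp only [measureReal_def]
  rw [tree_branch p B S hS, ENNReal.toReal_mul, ENNReal.toReal_prod]

lemma deadRoot_real (A : Type) [Fintype A] {p : ℝ} [IsProbabilityMeasure (berB p)] (h1 : p ≤ 1) :
    (treeMeasure A p).real (deadRoot A) = 1 - p := by
  unfold deadRoot
  rw [tree_branch_real p _ _ fun _ => MeasurableSet.univ, berB_real_false h1]
  simp

lemma iterE_real {A : Type} [Fintype A] {p : ℝ} [IsProbabilityMeasure (berB p)]
    (h0 : 0 ≤ p) (h1 : p ≤ 1) {S : Set (TreeSpace A)} (hS : MeasurableSet S) (m : ℕ) :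
    (treeMeasure A p).real (iterE S m) =
      (genF p (Fintype.card A))^[m] ((treeMeasure A p).real S) := by
  induction m with
  | zero => rfl
  | succ m ih =>
    rw [Function.iterate_succ_apply', ← ih]
    change (treeMeasure A p).real (_ ∪ _) = _
    rw [measureReal_union _ (measurableSet_branch _ _ fun _ => MeasurableSet.univ),
      tree_branch_real p _ _ fun _ => measurableSet_iterE hS m,
      tree_branch_real p _ _ fun _ => MeasurableSet.univ, berB_real_true h0, berB_real_false h1]
    · simp [genF]; ring
    · rw [Set.disjoint_left]
      rintro ω ⟨h, _⟩ ⟨h', _⟩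
      simp only [mem_singleton_iff] at h h'
      simp [h] at h'

lemma rowEvent_real {M : ℕ} (hM : 2 ≤ M) {p : ℝ} [IsProbabilityMeasure (berB p)]
    (h0 : 0 < p) (h1 : p ≤ 1) (k : ℕ) :
    p ^ (2 * M ^ k) ≤ p * (treeMeasure (Alpha 2 M) p).real (rowEvent M k) := by
  induction k with
  | zero =>
    have : rowEvent M 0 = {ω | ω [] ∈ ({true} : Set Bool) ∧
        ∀ a : Alpha 2 M, shiftT a ω ∈ (univ : Set (TreeSpace (Alpha 2 M)))} := by
      ext; simp [rowEvent]
    rw [this, tree_branch_real p _ _ fun _ => MeasurableSet.univ, berB_real_true h0.le]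
    simp [pow_two]
  | succ k ih =>
    have hm : ∀ a : Alpha 2 M,
        MeasurableSet (if (a 1).val = 0 then rowEvent M k else univ) := by
      intro a
      split_ifs
      · exact measurableSet_rowEvent M k
      · exact MeasurableSet.univ
    rw [rowEvent, tree_branch_real p _ _ hm, berB_real_true h0.le]
    set τ := (treeMeasure (Alpha 2 M) p).real (rowEvent M k) with hτ
    have hτ0 : 0 ≤ τ := measureReal_nonneg
    have hτ1 : τ ≤ 1 := measureReal_le_one
    have hprod : τ ^ M ≤ ∏ a : Alpha 2 M, (treeMeasure (Alpha 2 M) p).real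
        (if (a 1).val = 0 then rowEvent M k else univ) := by
      have h2 : ∀ a : Alpha 2 M, (treeMeasure (Alpha 2 M) p).real
        (if (a 1).val = 0 then rowEvent M k else univ) = if (a 1).val = 0 then τ else 1 := by
        intro a
        split_ifs <;> simp [hτ]
      simp_rw [h2]
      rw [Finset.prod_ite, Finset.prod_const, Finset.prod_const_one, mul_one]
      apply pow_le_pow_of_le_one hτ0 hτ1
      have := Finset.card_le_card_of_injOn (s := Finset.univ.filter fun a : Alpha 2 M => (a 1).val = 0)
        (t := Finset.univ) (fun a : Alpha 2 M => a 0) (fun _ _ => Finset.mem_univ _) (by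
          intro a ha b hb hab
          simp only [Finset.coe_filter, Finset.mem_univ, true_and, mem_ofPred_eq] at ha hb
          funext i
          fin_cases i
          · exact hab
          · exact Fin.ext (by simpa using ha.trans hb.symm))
      simpa using this
    calc p ^ (2 * M ^ (k + 1)) = (p ^ (2 * M ^ k)) ^ M := by rw [← pow_mul]; congr 1; ring
      _ ≤ (p * τ) ^ M := by gcongr
      _ = p ^ M * τ ^ M := mul_pow _ _ _
      _ ≤ p ^ 2 * τ ^ M := by
        gcongr ?_ * _
        exact pow_le_pow_of_le_one h0.le h1 hM
      _ = p * (p * τ ^ M) := by ring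
      _ ≤ _ := by gcongr

lemma iterE_mono {A : Type} {S T : Set (TreeSpace A)} (h : S ⊆ T) (m : ℕ) :
    iterE S m ⊆ iterE T m := by
  induction m with
  | zero => exact h
  | succ m ih =>
    rintro ω (h | h)
    · exact Or.inl ⟨h.1, fun a => ih (h.2 a)⟩
    · exact Or.inr h

lemma not_mem_iterE {A : Type} {S : Set (TreeSpace A)} (hS : deadRoot A ⊆ S) (m : ℕ)
    (ω : TreeSpace A) (h : ω ∉ iterE S m) :
    ∃ w : List A, w.length = m ∧ (∀ u, u <+: w → ω u = true) ∧ (fun t => ω (w ++ t)) ∉ S := by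
  induction m generalizing ω with
  | zero =>
    refine ⟨[], rfl, ?_, h⟩
    intro u hu
    rw [List.prefix_nil] at hu
    subst hu
    by_contra hc
    exact h (hS ⟨by simpa using hc, fun _ => trivial⟩)
  | succ m ih =>
    have hroot : ω [] = true := by
      by_contra hc
      exact h (Or.inr ⟨by simpa using hc, fun _ => trivial⟩)
    have : ∃ a, shiftT a ω ∉ iterE S m := by
      by_contra hc
      push Not at hc
      exact h (Or.inl ⟨hroot, hc⟩)
    obtain ⟨a, ha⟩ := this
    obtain ⟨w, hw, hp, hs⟩ := ih _ ha
    refine ⟨a :: w, by simp [hw], ?_, hs⟩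
    intro u hu
    cases u with
    | nil => exact hroot
    | cons b u =>
      rw [List.cons_prefix_cons] at hu
      obtain ⟨rfl, hu⟩ := hu
      exact hp u hu

lemma not_mem_iterE_dead {A : Type} (m : ℕ) (ω : TreeSpace A) (w : List A) (hw : w.length = m)
    (h : ∀ u, u <+: w → ω u = true) : ω ∉ iterE (deadRoot A) m := by
  induction m generalizing ω w with
  | zero =>
    rintro ⟨h', _⟩
    have := h [] List.nil_prefix
    simp [this] at h'
  | succ m ih =>
    have hr := h [] List.nil_prefix
    rintro (⟨_, h'⟩ | ⟨h', _⟩)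
    · cases w with
      | nil => simp at hw
      | cons a w =>
        refine ih (shiftT a ω) w (by simpa using hw) ?_ (h' a)
        intro u hu
        exact h (a :: u) (by simpa using hu)
    · simp [hr] at h'

lemma rowEvent_spec {M : ℕ} (k : ℕ) (ω : TreeSpace (Alpha 2 M)) (h : ω ∈ rowEvent M k)
    (v : List (Alpha 2 M)) (hv : v.length ≤ k) (hr : ∀ a ∈ v, (a 1).val = 0) : ω v = true := by
  induction k generalizing ω v with
  | zero =>
    have : v = [] := List.length_eq_zero_iff.1 (by omega)
    subst this; exact h
  | succ k ih =>
    cases v with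
    | nil => exact h.1
    | cons a v =>
      have h2 := h.2 a
      rw [if_pos (hr a (by simp))] at h2
      exact ih (shiftT a ω) h2 v (by simpa using hv) fun b hb => hr b (by simp [hb])

lemma deadRoot_sub_row (M k : ℕ) : deadRoot (Alpha 2 M) ⊆ (rowEvent M k)ᶜ := by
  rintro ω ⟨h, _⟩ h'
  have := rowEvent_spec k ω h' [] (by simp) (by simp)
  simp [this] at h

/-- The labelling of the tree at a first level square. -/
def block {M : ℕ} (a : Alpha 2 M) (ω : PercSpace 2 M) : TreeSpace (Alpha 2 M) :=
  fun t => ω ⟨a :: t, by simp⟩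

lemma measurable_block {M : ℕ} (a : Alpha 2 M) : Measurable (block a) := by
  unfold block; fun_prop

/-- Level `m+1` is alive, but no level `m+1` square contains a full row `k` levels below. -/
def badSet (M k m : ℕ) : Set (PercSpace 2 M) :=
  {ω | (∀ a, block a ω ∈ iterE (rowEvent M k)ᶜ m) ∧
    ¬ ∀ a, block a ω ∈ iterE (deadRoot (Alpha 2 M)) m}

lemma measurableSet_badSet (M k m : ℕ) : MeasurableSet (badSet M k m) := by
  have h : ∀ S : Set (TreeSpace (Alpha 2 M)), MeasurableSet S →
      MeasurableSet {ω : PercSpace 2 M | ∀ a, block a ω ∈ S} := by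
    intro S hS
    rw [show {ω : PercSpace 2 M | ∀ a, block a ω ∈ S} = ⋂ a, block a ⁻¹' S by ext; simp]
    exact MeasurableSet.iInter fun a => measurable_block a hS
  exact (h _ (measurableSet_iterE (measurableSet_rowEvent M k).compl m)).inter
    (h _ (measurableSet_iterE (measurableSet_deadRoot _) m)).compl

lemma badSet_real {M : ℕ} (hM : 2 ≤ M) {p : ℝ} (h0 : 0 < p) (h1 : p ≤ 1)
    [IsProbabilityMeasure (berB p)]
    {P : Measure (PercSpace 2 M)} (hP : IsBernoulliPerc 2 M p P) (k m : ℕ) :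
    P.real (badSet M k m) ≤ p⁻¹ *
      ((genF p (M ^ 2))^[m + 1] (1 - (treeMeasure (Alpha 2 M) p).real (rowEvent M k)) -
      (genF p (M ^ 2))^[m + 1] 0) := by
  have hcard : Fintype.card (Alpha 2 M) = M ^ 2 := by simp
  set μ := treeMeasure (Alpha 2 M) p with hμ
  have hmeas : Measurable (dropRoot : TreeSpace (Alpha 2 M) → PercSpace 2 M) := by
    unfold dropRoot; fun_prop
  have hD := measurableSet_iterE (measurableSet_rowEvent M k).compl m
  have hX := measurableSet_iterE (measurableSet_deadRoot (Alpha 2 M)) m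
  have e1 : P.real (badSet M k m) = μ.real
      ({ω | ω [] ∈ (univ : Set Bool) ∧ ∀ a, shiftT a ω ∈ iterE (rowEvent M k)ᶜ m} \
        {ω | ω [] ∈ (univ : Set Bool) ∧ ∀ a, shiftT a ω ∈ iterE (deadRoot (Alpha 2 M)) m}) := by
    rw [perc_eq hP, map_measureReal_apply hmeas (measurableSet_badSet M k m)]
    congr 1
    ext ω
    simp only [badSet, mem_preimage, mem_ofPred_eq, mem_sdiff, mem_univ, true_and]
    rfl
  have hsub : {ω : TreeSpace (Alpha 2 M) | ω [] ∈ (univ : Set Bool) ∧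
      ∀ a, shiftT a ω ∈ iterE (deadRoot (Alpha 2 M)) m} ⊆
      {ω | ω [] ∈ (univ : Set Bool) ∧ ∀ a, shiftT a ω ∈ iterE (rowEvent M k)ᶜ m} :=
    fun ω h => ⟨h.1, fun a => iterE_mono (deadRoot_sub_row M k) m (h.2 a)⟩
  rw [e1, measureReal_sdiff hsub (measurableSet_branch _ _ fun _ => hX),
    tree_branch_real p _ _ fun _ => hX, tree_branch_real p _ _ fun _ => hD]
  simp only [probReal_univ, one_mul, Finset.prod_const, Finset.card_univ, hcard]
  rw [iterE_real h0.le h1 (measurableSet_rowEvent M k).compl,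
    iterE_real h0.le h1 (measurableSet_deadRoot _), hcard, deadRoot_real _ h1,
    probReal_compl_eq_one_sub (measurableSet_rowEvent M k), ← hμ,
    Function.iterate_succ_apply', Function.iterate_succ_apply']
  set x := (genF p (M ^ 2))^[m] (1 - μ.real (rowEvent M k))
  have hmono : (genF p (M ^ 2))^[m] 0 ≤ (genF p (M ^ 2))^[m] (1 - p) :=
    genF_iter_mono h0.le h1 le_rfl (by linarith) m
  have hmono2 := pow_le_pow_left₀ (genF_iter_nonneg (N := M ^ 2) h0.le h1 le_rfl m) hmono (M ^ 2)
  have : p⁻¹ * (genF p (M ^ 2) x - genF p (M ^ 2) ((genF p (M ^ 2))^[m] 0)) =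
      x ^ (M ^ 2) - ((genF p (M ^ 2))^[m] 0) ^ (M ^ 2) := by
    generalize (genF p (M ^ 2))^[m] 0 = z
    unfold genF
    field_simp
    ring
  rw [this]
  linarith

lemma ae_good {M : ℕ} (hM : 2 ≤ M) {p : ℝ} (hp0 : ((M : ℝ))⁻¹ ^ 2 < p) (hp1 : p ≤ 1)
    {P : Measure (PercSpace 2 M)} (hP : IsBernoulliPerc 2 M p P) :
    ∃ lam : ℝ, lam ∈ Ioo (0 : ℝ) 1 ∧ ∀ᵐ ω ∂P, ∃ N₀ : ℕ, ∀ n > N₀, ∃ k m : ℕ,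
      n = m + 1 + k ∧ lam * n < (M ^ k : ℕ) ∧ ω ∉ badSet M k m := by
  have hMr : (2 : ℝ) ≤ M := by exact_mod_cast hM
  have hM0 : (0 : ℝ) < M := by linarith
  have h0 : 0 < p := lt_of_le_of_lt (by positivity) hp0
  have := berB_prob h0.le hp1
  have := hP.1
  have hN : 1 < p * ((M ^ 2 : ℕ) : ℝ) := by
    push_cast
    rw [inv_pow, inv_lt_iff_one_lt_mul₀ (by positivity)] at hp0
    linarith
  obtain ⟨a, r, ha, hr0, hr1, hcon⟩ := genF_contract h0 hp1 hN
  obtain ⟨q, hq⟩ := pow_unbounded_of_one_lt p⁻¹ ha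
  have hqp : 1 ≤ a ^ q * p := by
    rw [inv_lt_iff_one_lt_mul₀ h0] at hq
    linarith
  set L : ℕ := 2 * q + 1 with hL
  set lam : ℝ := 1 / (M * (2 * L)) with hlam
  have hLpos : (1 : ℝ) ≤ L := by rw [hL]; push_cast; linarith [(Nat.cast_nonneg q : (0:ℝ) ≤ q)]
  have hlam0 : 0 < lam := by positivity
  have hlam1 : lam < 1 := by
    rw [hlam, div_lt_one (by positivity)]
    nlinarith
  refine ⟨lam, ⟨hlam0, hlam1⟩, ?_⟩
  set kk : ℕ → ℕ := fun n => Nat.log M ⌊lam * n⌋₊ + 1 with hkk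
  set n0 : ℕ := ⌈1 / lam⌉₊ with hn0
  have hx : ∀ n ≥ n0, 1 ≤ lam * n := by
    intro n hn
    have : 1 / lam ≤ n := (Nat.le_ceil _).trans (by exact_mod_cast hn)
    rwa [div_le_iff₀' hlam0] at this
  have hk1 : ∀ n : ℕ, lam * n < (M ^ kk n : ℕ) := by
    intro n
    have h2 : ⌊lam * n⌋₊ + 1 ≤ M ^ kk n := Nat.lt_pow_succ_log_self (by omega) _
    calc lam * n < ⌊lam * n⌋₊ + 1 := Nat.lt_floor_add_one _
      _ ≤ (M ^ kk n : ℕ) := by exact_mod_cast h2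
  have hk2 : ∀ n ≥ n0, 2 * L * M ^ kk n ≤ n := by
    intro n hn
    have hfl : ⌊lam * n⌋₊ ≠ 0 := by
      have := (Nat.one_le_floor_iff _).2 (hx n hn)
      omega
    have h3 : M ^ kk n ≤ M * ⌊lam * n⌋₊ := by
      rw [hkk]; simp only; rw [pow_succ, mul_comm]
      exact Nat.mul_le_mul_left _ (Nat.pow_log_le_self M hfl)
    have h4 : (⌊lam * n⌋₊ : ℝ) ≤ lam * n := Nat.floor_le (by positivity)
    have h5 : ((M ^ kk n : ℕ) : ℝ) ≤ M * (lam * n) := by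
      calc ((M ^ kk n : ℕ) : ℝ) ≤ ((M * ⌊lam * n⌋₊ : ℕ) : ℝ) := by exact_mod_cast h3
        _ = M * (⌊lam * n⌋₊ : ℝ) := by push_cast; ring
        _ ≤ _ := by gcongr
    have h6 : (M : ℝ) * (lam * n) * (2 * L) = n := by
      rw [hlam]; field_simp
    have h7 : ((2 * L * M ^ kk n : ℕ) : ℝ) ≤ (n : ℝ) := by
      rw [← h6]
      calc ((2 * L * M ^ kk n : ℕ) : ℝ) = ((M ^ kk n : ℕ) : ℝ) * (2 * L) := by push_cast; ring
        _ ≤ _ := by gcongr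
    exact_mod_cast h7
  have hklt : ∀ n, kk n < M ^ kk n := fun n => Nat.lt_pow_self (by omega)
  set s := √r with hs
  have hs0 : 0 ≤ s := Real.sqrt_nonneg r
  have hs1 : s < 1 := by rw [hs, Real.sqrt_lt' one_pos]; simpa using hr1
  have hbound : ∀ n ≥ n0, P.real (badSet M (kk n) (n - kk n - 1)) ≤ p⁻¹ * s ^ n := by
    intro n hn
    have b1 := hk2 n hn
    have b2 := hklt n
    set K := M ^ kk n with hK
    have b3 : 2 * L * K = 4 * (q * K) + 2 * K := by rw [hL]; ring
    set j := 2 * (q * K) with hj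
    set i := n - kk n - j with hi
    have hm1 : n - kk n - 1 + 1 = i + j := by omega
    have h2i : n ≤ 2 * i := by omega
    refine (badSet_real hM h0 hp1 hP _ _).trans ?_
    gcongr
    rw [hm1]
    have hτ1 : (treeMeasure (Alpha 2 M) p).real (rowEvent M (kk n)) ≤ 1 := measureReal_le_one
    have hτ0 : 0 ≤ (treeMeasure (Alpha 2 M) p).real (rowEvent M (kk n)) := measureReal_nonneg
    refine (hcon _ ⟨by linarith, by linarith⟩ i j ?_).trans ?_
    · have hτ := rowEvent_real hM h0 hp1 (kk n)
      set τ := (treeMeasure (Alpha 2 M) p).real (rowEvent M (kk n))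
      rw [← hK] at hτ
      have hτ' : p ^ (2 * K) ≤ τ := hτ.trans (mul_le_of_le_one_left hτ0 hp1)
      calc (1 : ℝ) ≤ (a ^ q * p) ^ (2 * K) := one_le_pow₀ hqp
        _ = a ^ j * p ^ (2 * K) := by rw [mul_pow, ← pow_mul, hj]; congr 2; ring
        _ ≤ a ^ j * τ := by gcongr
        _ = _ := by ring
    · have : r = s ^ 2 := (Real.sq_sqrt hr0).symm
      rw [this, ← pow_mul]
      exact pow_le_pow_of_le_one hs0 hs1.le h2i
  have hsum : ∑' n, P (if n0 ≤ n then badSet M (kk n) (n - kk n - 1) else ∅) ≠ ∞ := by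
    have hb : ∀ n, P (if n0 ≤ n then badSet M (kk n) (n - kk n - 1) else ∅) ≤
        ENNReal.ofReal (p⁻¹ * s ^ n) := by
      intro n
      split_ifs with h
      · rw [← ofReal_measureReal]
        exact ENNReal.ofReal_le_ofReal (hbound n h)
      · simp
    refine ne_top_of_le_ne_top ?_ (ENNReal.tsum_le_tsum hb)
    exact ((summable_geometric_of_lt_one hs0 hs1).mul_left _).tsum_ofReal_ne_top
  filter_upwards [ae_eventually_notMem hsum] with ω hω
  rw [Filter.eventually_atTop] at hω
  obtain ⟨N, hN⟩ := hω
  refine ⟨N + n0, fun n hn => ⟨kk n, n - kk n - 1, ?_, hk1 n, ?_⟩⟩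
  · have b1 := hk2 n (by omega)
    have b2 := hklt n
    set K := M ^ kk n with hK
    have b3 : 2 * L * K = 4 * (q * K) + 2 * K := by rw [hL]; ring
    omega
  · have := hN n (by omega)
    rwa [if_pos (by omega)] at this

/-! ### Geometry -/

lemma wordBase_cons (d M : ℕ) (hM : M ≠ 0) (a : Alpha d M) (w : List (Alpha d M)) (i : Fin d) :
    wordBase d M (a :: w) i = ((a i : ℕ) + wordBase d M w i) / M := by
  have hM' : (M : ℝ) ≠ 0 := by exact_mod_cast hM
  unfold wordBase
  refine (Fin.sum_univ_succ (n := w.length) _).trans ?_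
  rw [add_div, Finset.sum_div]
  congr 1
  · simp [zpow_neg, div_eq_mul_inv]
    left; rfl
  · refine Finset.sum_congr rfl fun j _ => ?_
    simp only [List.get_eq_getElem, Fin.val_succ, List.getElem_cons_succ]
    rw [mul_div_assoc]
    congr 1
    rw [eq_div_iff hM', ← zpow_add_one₀ hM']
    congr 1
    push_cast
    ring

lemma wordBase_bounds (d M : ℕ) (hM : M ≠ 0) (w : List (Alpha d M)) (i : Fin d) :
    0 ≤ wordBase d M w i ∧ wordBase d M w i + (M : ℝ) ^ (-(w.length : ℤ)) ≤ 1 := by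
  have hM' : (0 : ℝ) < M := by exact_mod_cast Nat.pos_of_ne_zero hM
  induction w with
  | nil => simp [wordBase]
  | cons a w ih =>
    rw [wordBase_cons d M hM]
    refine ⟨div_nonneg (add_nonneg (Nat.cast_nonneg _) ih.1) hM'.le, ?_⟩
    have h1 : (M : ℝ) ^ (-((a :: w).length : ℤ)) = (M : ℝ) ^ (-(w.length : ℤ)) / M := by
      rw [eq_div_iff hM'.ne', ← zpow_add_one₀ hM'.ne']
      congr 1
      simp
    rw [h1, ← add_div, div_le_one hM']
    have h2 : ((a i : ℕ) : ℝ) + 1 ≤ M := by exact_mod_cast (a i).2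
    linarith [ih.2]

lemma wordBase_append (d M : ℕ) (hM : M ≠ 0) (w v : List (Alpha d M)) (i : Fin d)
    (hv : ∀ a ∈ v, (a i).val = 0) : wordBase d M (w ++ v) i = wordBase d M w i := by
  induction w with
  | nil =>
    simp only [List.nil_append]
    unfold wordBase
    simp only [List.length_nil, Finset.univ_eq_empty, Finset.sum_empty]
    refine Finset.sum_eq_zero fun j _ => ?_
    rw [hv _ (List.get_mem v j)]
    simp
  | cons a w ih => rw [List.cons_append, wordBase_cons d M hM, wordBase_cons d M hM, ih]

lemma mem_interior_wordCube (d M : ℕ) (w : List (Alpha d M)) (x : EuclideanSpace ℝ (Fin d))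
    (h : ∀ i, wordBase d M w i < x i ∧ x i < wordBase d M w i + (M : ℝ) ^ (-(w.length : ℤ))) :
    x ∈ interior (wordCube d M w) := by
  rw [mem_interior]
  refine ⟨{x | ∀ i, wordBase d M w i < x i ∧
    x i < wordBase d M w i + (M : ℝ) ^ (-(w.length : ℤ))}, ?_, ?_, h⟩
  · intro y hy i
    exact ⟨(hy i).1.le, (hy i).2.le⟩
  · rw [show {x : EuclideanSpace ℝ (Fin d) | ∀ i, wordBase d M w i < x i ∧
      x i < wordBase d M w i + (M : ℝ) ^ (-(w.length : ℤ))} = ⋂ i,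
      {x : EuclideanSpace ℝ (Fin d) | wordBase d M w i < x i ∧
      x i < wordBase d M w i + (M : ℝ) ^ (-(w.length : ℤ))} by ext; simp]
    refine isOpen_iInter_of_finite fun i => ?_
    have hc : Continuous fun x : EuclideanSpace ℝ (Fin d) => x i := by fun_prop
    exact (isOpen_lt continuous_const hc).inter (isOpen_lt hc continuous_const)

/-- A full row of retained squares is met by a nearly horizontal line. -/
lemma row_line {M : ℕ} (hM : 2 ≤ M) (ω : PercSpace 2 M) (w : List (Alpha 2 M)) (k : ℕ)
    (h : ∀ v : List (Alpha 2 M), v.length = k → (∀ a ∈ v, (a 1).val = 0) →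
      Retained 2 M ω (w ++ v)) :
    ∃ z v : EuclideanSpace ℝ (Fin 2), v 0 ≠ 0 ∧ v 1 ≠ 0 ∧ MeetsOpenSquare z v ∧
      M ^ k ≤ {u : List (Alpha 2 M) | u.length = w.length + k ∧ Retained 2 M ω u ∧
                (interior (wordCube 2 M u) ∩ lineSeg z v).Nonempty}.ncard := by
  have hM0 : M ≠ 0 := by omega
  have hMr : (0 : ℝ) < M := by exact_mod_cast Nat.pos_of_ne_zero hM0
  set n := w.length + k with hn
  set δ : ℝ := (M : ℝ) ^ (-(n : ℤ)) with hδ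
  have hδ0 : 0 < δ := by positivity
  set y := wordBase 2 M w 1 with hy
  have hzero : 0 < M := by omega
  -- the row words
  let rowW : (Fin k → Fin M) → List (Alpha 2 M) := fun c =>
    List.ofFn fun i => ![c i, ⟨0, hzero⟩]
  have hlen : ∀ c, (rowW c).length = k := fun c => by simp [rowW]
  have hrow : ∀ c, ∀ a ∈ rowW c, (a 1).val = 0 := by
    intro c a ha
    simp only [rowW, List.mem_ofFn] at ha
    obtain ⟨i, rfl⟩ := ha
    simp
  have hbase : ∀ c, wordBase 2 M (w ++ rowW c) 1 = y := fun c =>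
    wordBase_append 2 M hM0 w _ 1 (hrow c)
  have hlen' : ∀ c, (w ++ rowW c).length = n := fun c => by simp [hlen, hn]
  have hyb : 0 ≤ y ∧ y + δ ≤ 1 := by
    have := wordBase_bounds 2 M hM0 (w ++ rowW fun _ => ⟨0, hzero⟩) 1
    rwa [hbase, hlen'] at this
  refine ⟨!₂[0, y + δ / 2], !₂[1, δ / 4], by simp, by simpa using hδ0.ne', ?_, ?_⟩
  · refine ⟨1 / 2, fun i => ?_⟩
    fin_cases i
    · norm_num
    · simp; constructor <;> nlinarith
  · have hfin : {u : List (Alpha 2 M) | u.length = n ∧ Retained 2 M ω u ∧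
        (interior (wordCube 2 M u) ∩
          lineSeg !₂[0, y + δ / 2] !₂[1, δ / 4]).Nonempty}.Finite :=
      (List.finite_length_eq (Alpha 2 M) n).subset fun u hu => hu.1
    have hinj : Function.Injective fun c => w ++ rowW c := by
      intro c c' hcc
      have h1 : rowW c = rowW c' := List.append_cancel_left hcc
      have h2 := List.ofFn_injective h1
      funext i
      have h3 := congrFun (congrFun h2 i) 0
      simpa using h3
    have hsub : (Set.range fun c => w ++ rowW c) ⊆
        {u : List (Alpha 2 M) | u.length = n ∧ Retained 2 M ω u ∧
        (interior (wordCube 2 M u) ∩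
          lineSeg !₂[0, y + δ / 2] !₂[1, δ / 4]).Nonempty} := by
      rintro _ ⟨c, rfl⟩
      refine ⟨hlen' c, h _ (hlen c) (hrow c), ?_⟩
      have hb := wordBase_bounds 2 M hM0 (w ++ rowW c) 0
      set x := wordBase 2 M (w ++ rowW c) 0 with hx
      rw [hlen', ← hδ] at hb
      refine ⟨!₂[x + δ / 2, y + δ / 2 + (x + δ / 2) * (δ / 4)], ?_, ?_, ?_⟩
      · apply mem_interior_wordCube
        rw [hlen', ← hδ]
        intro i
        fin_cases i
        · simp [← hx, hδ0]
        · have := hbase c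
          simp [this]; constructor <;> nlinarith
      · refine ⟨x + δ / 2, ?_⟩
        ext i
        fin_cases i <;> simp
      · intro i
        fin_cases i
        · simp; constructor <;> nlinarith
        · simp; constructor <;> nlinarith
    have hcard : (Set.range fun c => w ++ rowW c).ncard = M ^ k := by
      rw [← Set.image_univ, Set.ncard_image_of_injective _ hinj, Set.ncard_univ]
      simp
    rw [← hcard]
    exact Set.ncard_le_ncard hsub hfin

lemma alive_of_nonempty {M : ℕ} (ω : PercSpace 2 M) (h : percLimit 2 M ω ≠ ∅) (m : ℕ) :
    ∃ a, block a ω ∉ iterE (deadRoot (Alpha 2 M)) m := by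
  obtain ⟨x, hx⟩ := Set.nonempty_iff_ne_empty.2 h
  simp only [percLimit, mem_iInter] at hx
  have h1 := hx (m + 1) (by simp)
  simp only [approx, mem_iUnion] at h1
  obtain ⟨w, ⟨hw, hr⟩, _⟩ := h1
  cases w with
  | nil => simp at hw
  | cons a w =>
    refine ⟨a, not_mem_iterE_dead m _ w (by simpa using hw) fun u hu => ?_⟩
    exact hr (a :: u) (by simp) (by simpa using hu)

lemma good_line {M : ℕ} (hM : 2 ≤ M) (ω : PercSpace 2 M) (k m : ℕ)
    (hal : ∃ a, block a ω ∉ iterE (deadRoot (Alpha 2 M)) m) (hb : ω ∉ badSet M k m) :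
    ∃ z v : EuclideanSpace ℝ (Fin 2), v 0 ≠ 0 ∧ v 1 ≠ 0 ∧ MeetsOpenSquare z v ∧
      M ^ k ≤ {u : List (Alpha 2 M) | u.length = m + 1 + k ∧ Retained 2 M ω u ∧
                (interior (wordCube 2 M u) ∩ lineSeg z v).Nonempty}.ncard := by
  have : ∃ a, block a ω ∉ iterE (rowEvent M k)ᶜ m := by
    by_contra hc
    push Not at hc
    exact hb ⟨hc, by push Not; exact hal⟩
  obtain ⟨a, ha⟩ := this
  obtain ⟨w, hw, hp, hs⟩ := not_mem_iterE (deadRoot_sub_row M k) m _ ha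
  have hs : (fun t => block a ω (w ++ t)) ∈ rowEvent M k := not_not.1 hs
  have hret : ∀ v : List (Alpha 2 M), v.length = k → (∀ a ∈ v, (a 1).val = 0) →
      Retained 2 M ω ((a :: w) ++ v) := by
    intro v hv hrow u hu hpre
    cases u with
    | nil => exact absurd rfl hu
    | cons b u =>
      rw [List.cons_append, List.cons_prefix_cons] at hpre
      obtain ⟨rfl, hpre⟩ := hpre
      change block b ω u = true
      rcases List.prefix_or_prefix_of_prefix hpre (List.prefix_append w v) with h | h
      · exact hp u h
      · obtain ⟨s, rfl⟩ := h
        have hs' : s <+: v := (List.prefix_append_right_inj w).1 hpre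
        exact rowEvent_spec k _ hs s (hv ▸ hs'.length_le) fun c hc => hrow c (hs'.subset hc)
  have := row_line hM ω (a :: w) k hret
  simpa only [List.length_cons, hw] using this

/-- if `p > M⁻²` there is `λ ∈ (0,1)` such that, conditioned on
`E ≠ ∅`, almost surely for all large `n` some segment `ℓ ∈ 𝔏` meets the
interiors of more than `λ n` retained level-`n` squares. -/
theorem exists_slice_with_many_squares
    (M : ℕ) (hM : 2 ≤ M) (p : ℝ) (hp0 : ((M : ℝ))⁻¹ ^ 2 < p) (hp1 : p ≤ 1)
    (P : Measure (PercSpace 2 M)) (hP : IsBernoulliPerc 2 M p P) :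
    ∃ lam : ℝ, lam ∈ Set.Ioo (0 : ℝ) 1 ∧
      ∀ᵐ ω ∂(ProbabilityTheory.cond P {ω | percLimit 2 M ω ≠ ∅}),
        ∃ N₆ : ℕ, ∀ n > N₆, ∃ z v : EuclideanSpace ℝ (Fin 2),
          v 0 ≠ 0 ∧ v 1 ≠ 0 ∧ MeetsOpenSquare z v ∧
            lam * n < (({w : List (Alpha 2 M) | w.length = n ∧ Retained 2 M ω w ∧
                (interior (wordCube 2 M w) ∩ lineSeg z v).Nonempty}.ncard : ℝ)) := by
  obtain ⟨lam, hlam, hgood⟩ := ae_good hM hp0 hp1 hP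
  refine ⟨lam, hlam, ?_⟩
  set S : Set (PercSpace 2 M) := {ω | percLimit 2 M ω ≠ ∅} with hS
  set S' : Set (PercSpace 2 M) :=
    {ω | ∀ m : ℕ, ∃ a, block a ω ∉ iterE (deadRoot (Alpha 2 M)) m} with hS'
  have hsub : S ⊆ S' := fun ω h m => alive_of_nonempty ω h m
  have hmeas : MeasurableSet S' := by
    have : S' = ⋂ m : ℕ, ⋃ a, block a ⁻¹' (iterE (deadRoot (Alpha 2 M)) m)ᶜ := by
      ext; simp [hS']
    rw [this]
    exact MeasurableSet.iInter fun m => MeasurableSet.iUnion fun a =>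
      measurable_block a (measurableSet_iterE (measurableSet_deadRoot _) m).compl
  have hac : ProbabilityTheory.cond P S ≪ P.restrict S' := by
    unfold ProbabilityTheory.cond
    exact (Measure.smul_absolutelyContinuous).trans
      (Measure.restrict_mono hsub le_rfl).absolutelyContinuous
  refine hac.ae_le ((ae_restrict_iff' hmeas).2 ?_)
  filter_upwards [hgood] with ω hω hal
  obtain ⟨N, hN⟩ := hω
  refine ⟨N, fun n hn => ?_⟩
  obtain ⟨k, m, rfl, hlt, hbad⟩ := hN n hn
  obtain ⟨z, v, h0, h1, h2, h3⟩ := good_line hM ω k m (hal m) hbad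
  refine ⟨z, v, h0, h1, h2, hlt.trans_le ?_⟩
  exact_mod_cast h3
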